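/- Let U be a finite-dimensional real vector space with inner product, and let T : U → U be a linear map satisfying T² = -Id which commutes with an irreducible orthogonal representation ρ of a finite group Γ on U. Then T is an isometry (⟨Tu, Tu'⟩ = ⟨u, u'⟩ for all u, u') and skew-adjoint (⟨u, Tu'⟩ = -⟨Tu, u'⟩). -/

import Mathlib

open scoped RealInnerProductSpace

/-!
For an intertwiner `T` out of an irreducible orthogonal (or unitary) action, the symmetric operator
`T⋆T` commutes with the action, so one of its eigenspaces is everything and `T⋆T` is a scalar. Thus
`‖T u‖ = r * ‖u‖` for a constant `r`, and `T² = -1` forces `r = 1`. Skew-adjointness is then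
`⟪u, T v⟫ = ⟪T u, T (T v)⟫ = -⟪T u, v⟫`.
-/

section Schur

variable {ι R M : Type*} [CommRing R] [AddCommGroup M] [Module R M]

theorem eq_smul_one_of_hasEigenvalue_of_irreducible (ρ : ι → Module.End R M)
    (hirr : ∀ W : Submodule R M, (∀ i, ∀ u ∈ W, ρ i u ∈ W) → W = ⊥ ∨ W = ⊤)
    {f : Module.End R M} (hcomm : ∀ i, Commute f (ρ i)) {μ : R} (hμ : f.HasEigenvalue μ) :
    f = μ • 1 := by
  have htop : f.eigenspace μ = ⊤ :=
    (hirr _ fun i ↦ Module.End.mapsTo_genEigenspace_of_comm (hcomm i) μ 1).resolve_left hμ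
  ext u
  have hu : u ∈ f.eigenspace μ := htop ▸ Submodule.mem_top
  exact Module.End.mem_eigenspace_iff.mp hu

end Schur

theorem norm_map_eq_norm_of_norm_map_eq_mul_norm {E : Type*} [Norm E]
    {f : E → E} {r : ℝ} (hr : 0 ≤ r) (hf : ∀ x, ‖f x‖ = r * ‖x‖) (hff : ∀ x, ‖f (f x)‖ = ‖x‖)
    (x : E) : ‖f x‖ = ‖x‖ := by
  rcases eq_or_ne ‖x‖ 0 with hx | hx
  · rw [hf, hx, mul_zero]
  · have hrr : r * r = 1 := mul_right_cancel₀ hx <| by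
      rw [mul_assoc, ← hf, ← hf, hff, one_mul]
    have hr1 : r = 1 := by nlinarith
    rw [hf, hr1, one_mul]

section InnerProductSpace

open scoped InnerProductSpace

variable {ι 𝕜 E F : Type*} [RCLike 𝕜]
  [NormedAddCommGroup E] [InnerProductSpace 𝕜 E] [FiniteDimensional 𝕜 E]
  [NormedAddCommGroup F] [InnerProductSpace 𝕜 F] [FiniteDimensional 𝕜 F]

theorem semiconj_adjoint_of_semiconj {T : E →ₗ[𝕜] F} {e : E ≃ₗᵢ[𝕜] E} {e' : F →ₗᵢ[𝕜] F}
    (h : Function.Semiconj T e e') : Function.Semiconj (LinearMap.adjoint T) e' e := by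
  intro y
  refine ext_inner_left 𝕜 (e.surjective.forall.mpr fun x ↦ ?_)
  calc ⟪e x, LinearMap.adjoint T (e' y)⟫_𝕜
      = ⟪e' (T x), e' y⟫_𝕜 := by rw [LinearMap.adjoint_inner_right, h.eq]
    _ = ⟪x, LinearMap.adjoint T y⟫_𝕜 := by
      rw [e'.inner_map_map, LinearMap.adjoint_inner_right]
    _ = ⟪e x, e (LinearMap.adjoint T y)⟫_𝕜 := (e.inner_map_map _ _).symm

theorem exists_norm_map_eq_mul_norm_of_irreducible (ρ : ι → E ≃ₗᵢ[𝕜] E) (σ : ι → F →ₗᵢ[𝕜] F)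
    (hirr : ∀ W : Submodule 𝕜 E, (∀ i, ∀ u ∈ W, ρ i u ∈ W) → W = ⊥ ∨ W = ⊤)
    (T : E →ₗ[𝕜] F) (hcomm : ∀ i, Function.Semiconj T (ρ i) (σ i)) :
    ∃ r : ℝ, 0 ≤ r ∧ ∀ u, ‖T u‖ = r * ‖u‖ := by
  rcases subsingleton_or_nontrivial E with _ | _
  · exact ⟨0, le_rfl, fun u ↦ by simp [Subsingleton.elim u 0]⟩
  have hcommS (i : ι) : Commute (LinearMap.adjoint T ∘ₗ T) (ρ i).toLinearMap :=
    LinearMap.ext ((semiconj_adjoint_of_semiconj (hcomm i)).comp_left (hcomm i))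
  obtain ⟨c, hc⟩ : ∃ c : 𝕜, Module.End.HasEigenvalue (LinearMap.adjoint T ∘ₗ T) c :=
    ⟨_, T.isSymmetric_adjoint_comp_self.hasEigenvalue_iSup_of_finiteDimensional⟩
  have hscalar (u : E) : LinearMap.adjoint T (T u) = c • u :=
    LinearMap.congr_fun (eq_smul_one_of_hasEigenvalue_of_irreducible _ hirr hcommS hc) u
  have hsq (u : E) : ‖T u‖ ^ 2 = RCLike.re c * ‖u‖ ^ 2 := by
    rw [← inner_self_eq_norm_sq (𝕜 := 𝕜), ← LinearMap.adjoint_inner_right, hscalar,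
      inner_smul_right, inner_self_eq_norm_sq_to_K, ← RCLike.ofReal_pow, RCLike.re_mul_ofReal]
  refine ⟨√(RCLike.re c), Real.sqrt_nonneg _, fun u ↦ ?_⟩
  rw [← Real.sqrt_sq (norm_nonneg (T u)), hsq, Real.sqrt_mul' _ (sq_nonneg _),
    Real.sqrt_sq (norm_nonneg u)]

theorem complex_structure_isometry_skewAdjoint_general (ρ : ι → E ≃ₗᵢ[𝕜] E)
    (hirr : ∀ W : Submodule 𝕜 E, (∀ i, ∀ u ∈ W, ρ i u ∈ W) → W = ⊥ ∨ W = ⊤)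
    (T : E →ₗ[𝕜] E) (hT2 : ∀ u, T (T u) = -u) (hcomm : ∀ i u, T (ρ i u) = ρ i (T u)) :
    (∀ u v : E, ⟪T u, T v⟫_𝕜 = ⟪u, v⟫_𝕜) ∧ (∀ u v : E, ⟪u, T v⟫_𝕜 = -⟪T u, v⟫_𝕜) := by
  obtain ⟨r, hr, hscale⟩ := exists_norm_map_eq_mul_norm_of_irreducible ρ
    (fun i ↦ (ρ i).toLinearIsometry) hirr T hcomm
  have hnorm : ∀ u, ‖T u‖ = ‖u‖ :=
    norm_map_eq_norm_of_norm_map_eq_mul_norm hr hscale fun u ↦ by rw [hT2, norm_neg]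
  have hinner : ∀ u v, ⟪T u, T v⟫_𝕜 = ⟪u, v⟫_𝕜 :=
    (LinearMap.norm_map_iff_inner_map_map T).mp hnorm
  exact ⟨hinner, fun u v ↦ by rw [← hinner u (T v), hT2, inner_neg_right]⟩

end InnerProductSpace

/-- A linear map `T` with `T² = -Id` commuting with an irreducible orthogonal representation
of a finite group is an isometry and skew-adjoint. -/
theorem complex_structure_isometry_skewAdjoint
    {Γ U : Type*} [Group Γ] [Finite Γ]
    [NormedAddCommGroup U] [InnerProductSpace ℝ U] [FiniteDimensional ℝ U]
    (ρ : Γ →* (U ≃ₗᵢ[ℝ] U))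
    (hirr : ∀ W : Submodule ℝ U, (∀ (g : Γ), ∀ u ∈ W, ρ g u ∈ W) → W = ⊥ ∨ W = ⊤)
    (T : U →ₗ[ℝ] U) (hT2 : ∀ u, T (T u) = -u)
    (hcomm : ∀ (g : Γ) (u : U), T (ρ g u) = ρ g (T u)) :
    (∀ u u' : U, ⟪T u, T u'⟫ = ⟪u, u'⟫) ∧ (∀ u u' : U, ⟪u, T u'⟫ = -⟪T u, u'⟫) :=
  complex_structure_isometry_skewAdjoint_general ρ hirr T hT2 hcomm
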